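/- arXiv:0812.1318 — 2 statements merged into one kernel-verified Lean document; each statement's English description precedes it below -/
import Mathlib

section
/- Let k be a positive integer with 4 ∣ k+2, set k̄ = k+2, and write k̄ = 2^{2r+ε}·p with p odd, ε ∈ {0,1}, and r ≥ 1. Then the number of triples (v,z,n) of integers with 1 ≤ v ≤ k̄/2, 2v ∣ k̄, k̄ ∣ v², 1 ≤ z ≤ 2v²/k̄, (2v²/k̄) ∣ (z²−1), and n ∈ {0,1}, equals 2·(4r−3+ε)·d(p), where d(m) denotes the number of positive divisors of m. -/
/-!
Put `k + 2 = 4m`. The conditions on `v` say that `v = 2u` with `u ∣ m ∣ u²`, that is, `m = s²w` and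
`u = sw`; then `2v² / (k + 2) = 2w`, and `z` runs over the square roots of one modulo `2w`. So half
the number of triples is `∑_{s² ∣ m} N(2m / s²)`, where `N(n)` counts the square roots of one modulo
`n`. This is a Dirichlet convolution of multiplicative functions of `m`, hence is determined by its
values at prime powers. At `q ^ b` it grows by `N(2q ^ (b + 2))` when `b` increases by two, which is
`2` for odd `q` (giving `b + 1 = d(q ^ b)`) and `4` for `q = 2`.
-/

open Finset

section SqrtOne

/-- The arithmetic function counting the square roots of one modulo `n`, represented by the residues
`1, …, n`. The residue `0` must be avoided because `0 ^ 2 - 1 = 0` in `ℕ`. -/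
def cardSqrtOne : ArithmeticFunction ℕ where
  toFun n := #{z ∈ Icc 1 n | n ∣ z ^ 2 - 1}
  map_zero' := rfl

theorem cardSqrtOne_apply (n : ℕ) : cardSqrtOne n = #{z ∈ Icc 1 n | n ∣ z ^ 2 - 1} :=
  rfl

theorem zmod_natCast_sq_eq_one_iff {n z : ℕ} (hz : 1 ≤ z) :
    (z : ZMod n) ^ 2 = 1 ↔ n ∣ z ^ 2 - 1 := by
  rw [← ZMod.natCast_eq_zero_iff, Nat.cast_sub (Nat.one_le_pow _ _ hz), sub_eq_zero, Nat.cast_pow,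
    Nat.cast_one]

theorem cardSqrtOne_eq_natCard (n : ℕ) [NeZero n] :
    cardSqrtOne n = Nat.card {x : ZMod n // x ^ 2 = 1} := by
  have periodic : Function.Periodic (fun z : ℕ => (z : ZMod n) ^ 2 = 1) n := fun z => by simp
  calc cardSqrtOne n = #{z ∈ Ico 1 (1 + n) | ((z : ℕ) : ZMod n) ^ 2 = 1} := by
        rw [cardSqrtOne_apply, add_comm 1 n, Ico_add_one_right_eq_Icc]
        exact congrArg card <| filter_congr fun z hz =>
          (zmod_natCast_sq_eq_one_iff (mem_Icc.mp hz).1).symm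
    _ = #{z ∈ range n | ((z : ℕ) : ZMod n) ^ 2 = 1} := by
        rw [Nat.filter_Ico_card_eq_of_periodic _ _ _ periodic, Nat.count_eq_card_filter_range]
    _ = #{x : ZMod n | x ^ 2 = 1} :=
        card_nbij' (fun z => (z : ZMod n)) ZMod.val (by simp [Set.MapsTo])
          (by simp [Set.MapsTo, ZMod.val_lt])
          (fun z hz => ZMod.val_cast_of_lt (mem_range.mp (mem_filter.mp hz).1))
          (fun x _ => ZMod.natCast_zmod_val x)
    _ = Nat.card {x : ZMod n // x ^ 2 = 1} := (Nat.subtype_card _ (by simp)).symm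

theorem isMultiplicative_cardSqrtOne : cardSqrtOne.IsMultiplicative := by
  refine ArithmeticFunction.IsMultiplicative.iff_ne_zero.mpr ⟨rfl, fun {m n} hm hn hmn => ?_⟩
  have : NeZero m := ⟨hm⟩
  have : NeZero n := ⟨hn⟩
  let e := ZMod.chineseRemainder hmn
  have sq_eq_one_iff (x : ZMod (m * n)) : x ^ 2 = 1 ↔ (e x).1 ^ 2 = 1 ∧ (e x).2 ^ 2 = 1 := by
    rw [← e.injective.eq_iff, map_pow, map_one, Prod.ext_iff]
    rfl
  simp only [cardSqrtOne_eq_natCard]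
  rw [← Nat.card_prod]
  exact Nat.card_congr <| (e.toEquiv.subtypeEquiv sq_eq_one_iff).trans
    (Equiv.subtypeProdEquivProd (p := fun x : ZMod m => x ^ 2 = 1))

theorem natCard_pow_eq_one_of_isCyclic_units (M : Type*) [CommMonoid M] [Finite Mˣ] [IsCyclic Mˣ]
    (d : ℕ) [NeZero d] : Nat.card {x : M // x ^ d = 1} = (Nat.card Mˣ).gcd d := by
  rw [← IsCyclic.card_powMonoidHom_ker]
  exact Nat.card_congr
    { toFun x := ⟨(rootsOfUnity.mkOfPowEq x.1 x.2).1, (rootsOfUnity.mkOfPowEq x.1 x.2).2⟩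
      invFun u := ⟨u.1, by simpa using congrArg Units.val (MonoidHom.mem_ker.mp u.2)⟩
      left_inv _ := rfl
      right_inv _ := Subtype.ext (Units.ext rfl) }

theorem cardSqrtOne_odd_prime_pow {q b : ℕ} (hq : q.Prime) (hq2 : q ≠ 2) (hb : b ≠ 0) :
    cardSqrtOne (q ^ b) = 2 := by
  have : NeZero (q ^ b) := ⟨pow_ne_zero b hq.ne_zero⟩
  have : IsCyclic (ZMod (q ^ b))ˣ := ZMod.isCyclic_units_of_prime_pow q hq hq2 b
  have two_lt : 2 < q ^ b :=
    (hq.two_le.lt_of_ne' hq2).trans_le (Nat.le_self_pow hb q)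
  rw [cardSqrtOne_eq_natCard, natCard_pow_eq_one_of_isCyclic_units, Nat.card_eq_fintype_card,
    ZMod.card_units_eq_totient]
  exact Nat.gcd_eq_right (Nat.totient_even two_lt).two_dvd

theorem two_pow_dvd_odd_sq_sub_one_iff {n : ℕ} (hn : n ≠ 0) (b : ℕ) :
    2 ^ (n + 2) ∣ (2 * b + 1) ^ 2 - 1 ↔ 2 ^ n ∣ b ∨ 2 ^ n ∣ b + 1 := by
  have four_mul : (2 * b + 1) ^ 2 - 1 = 2 ^ 2 * (b * (b + 1)) := Nat.sub_eq_of_eq_add (by ring)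
  have isPrimePow : IsPrimePow (2 ^ n) := Nat.prime_two.isPrimePow.pow hn
  rw [four_mul, pow_add, mul_comm (2 ^ n), Nat.mul_dvd_mul_iff_left (by norm_num),
    (Nat.coprime_self_add_right.mpr (Nat.coprime_one_right b)).isPrimePow_dvd_mul isPrimePow]

theorem odd_of_two_dvd_sq_sub_one {z : ℕ} (hz : 1 ≤ z) (h : 2 ∣ z ^ 2 - 1) : Odd z := by
  by_contra hodd
  have even_sq : Even (z ^ 2) := (Nat.not_odd_iff_even.mp hodd).pow_of_ne_zero two_ne_zero
  exact Nat.not_even_iff_odd.mpr (Nat.Even.sub_odd (Nat.one_le_pow _ _ hz) even_sq odd_one)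
    (even_iff_two_dvd.mpr h)

theorem filter_two_pow_dvd_sq_sub_one {n : ℕ} (hn : n ≠ 0) :
    {z ∈ Icc 1 (2 ^ (n + 2)) | 2 ^ (n + 2) ∣ z ^ 2 - 1} =
      ({1, 2 * 2 ^ n - 1, 2 * 2 ^ n + 1, 4 * 2 ^ n - 1} : Finset ℕ) := by
  have two_le : 2 ≤ 2 ^ n := Nat.le_self_pow hn 2
  have four_mul : 2 ^ (n + 2) = 4 * 2 ^ n := by ring
  ext z
  simp only [mem_filter, mem_Icc, mem_insert, mem_singleton]
  constructor
  · rintro ⟨⟨one_le, le⟩, hdvd⟩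
    obtain ⟨b, rfl⟩ := odd_of_two_dvd_sq_sub_one one_le ((dvd_pow_self 2 (by omega)).trans hdvd)
    rcases (two_pow_dvd_odd_sq_sub_one_iff hn b).mp hdvd with ⟨c, hc⟩ | ⟨c, hc⟩
    · have c_lt : c < 2 := by
        by_contra! le_c
        have mul_le := Nat.mul_le_mul_left (2 ^ n) le_c
        omega
      interval_cases c <;> omega
    · have c_lt : c < 3 := by
        by_contra! le_c
        have mul_le := Nat.mul_le_mul_left (2 ^ n) le_c
        omega
      interval_cases c <;> omega
  · intro hz
    have exists_half : ∃ b, z = 2 * b + 1 ∧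
        (b = 0 ∨ b = 2 ^ n ∨ b + 1 = 2 ^ n ∨ b + 1 = 2 ^ n * 2) := ⟨z / 2, by omega, by omega⟩
    obtain ⟨b, rfl, hb⟩ := exists_half
    refine ⟨by omega, (two_pow_dvd_odd_sq_sub_one_iff hn b).mpr ?_⟩
    rcases hb with hb | hb | hb | hb <;> simp [hb]

theorem cardSqrtOne_two_pow {n : ℕ} (hn : 3 ≤ n) : cardSqrtOne (2 ^ n) = 4 := by
  obtain ⟨n, rfl⟩ := Nat.exists_eq_add_of_le' hn
  have two_le : 2 ≤ 2 ^ (n + 1) := Nat.le_self_pow n.succ_ne_zero 2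
  rw [cardSqrtOne_apply, filter_two_pow_dvd_sq_sub_one n.succ_ne_zero]
  repeat rw [card_insert_of_notMem (by simp only [mem_insert, mem_singleton]; omega)]
  rw [card_singleton]

end SqrtOne

section Square

/-- The indicator function of the positive squares, as an arithmetic function. Convolving with it
sums over the square divisors. -/
def squareIndicator (R : Type*) [Zero R] [One R] : ArithmeticFunction R where
  toFun n := if n ≠ 0 ∧ IsSquare n then 1 else 0
  map_zero' := rfl

theorem squareIndicator_apply {R : Type*} [Zero R] [One R] {n : ℕ} (hn : n ≠ 0) :
    squareIndicator R n = if IsSquare n then 1 else 0 := by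
  simp [squareIndicator, hn]

theorem isSquare_mul_iff_of_coprime {m n : ℕ} (h : m.Coprime n) :
    IsSquare (m * n) ↔ IsSquare m ∧ IsSquare n := by
  refine ⟨fun ⟨c, hc⟩ => ?_, fun ⟨hm, hn⟩ => hm.mul hn⟩
  rw [← pow_two] at hc
  rw [isSquare_iff_exists_sq, isSquare_iff_exists_sq]
  exact ⟨exists_eq_pow_of_mul_eq_pow (Nat.isUnit_iff.mpr h) hc,
    exists_eq_pow_of_mul_eq_pow (Nat.isUnit_iff.mpr h.symm) (mul_comm m n ▸ hc)⟩

theorem isMultiplicative_squareIndicator (R : Type*) [MonoidWithZero R] :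
    (squareIndicator R).IsMultiplicative := by
  refine ArithmeticFunction.IsMultiplicative.iff_ne_zero.mpr ⟨rfl, fun {m n} hm hn hmn => ?_⟩
  simp only [squareIndicator_apply, hm, hn, mul_ne_zero, ne_eq, not_false_eq_true,
    isSquare_mul_iff_of_coprime hmn, ite_and, ite_mul, one_mul, zero_mul]

theorem isSquare_prime_pow_iff {q i : ℕ} (hq : q.Prime) : IsSquare (q ^ i) ↔ Even i := by
  refine ⟨fun ⟨c, hc⟩ => ?_, fun h => h.isSquare_pow q⟩
  obtain ⟨j, -, rfl⟩ := (Nat.dvd_prime_pow hq).mp ⟨c, hc⟩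
  exact ⟨j, Nat.pow_right_injective hq.two_le (hc.trans (pow_add q j j).symm)⟩

end Square

section Convolution

variable {R : Type*}

/-- The arithmetic function `n ↦ f (q * n)`; for `q = 2` it absorbs the factor two in the modulus
`2v² / (k + 2)`. -/
def dilate [Zero R] (q : ℕ) (f : ArithmeticFunction R) : ArithmeticFunction R where
  toFun n := f (q * n)
  map_zero' := by simp

theorem dilate_apply [Zero R] (q : ℕ) (f : ArithmeticFunction R) (n : ℕ) :
    dilate q f n = f (q * n) :=
  rfl

theorem dilate_apply_of_coprime [MonoidWithZero R] {q n : ℕ} {f : ArithmeticFunction R}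
    (hf : f.IsMultiplicative) (hfq : f q = 1) (hqn : q.Coprime n) : dilate q f n = f n := by
  rw [dilate_apply, hf.2 hqn, hfq, one_mul]

theorem isMultiplicative_dilate [CommMonoidWithZero R] {q : ℕ} {f : ArithmeticFunction R}
    (hq : q.Prime) (hf : f.IsMultiplicative) (hfq : f q = 1) : (dilate q f).IsMultiplicative := by
  refine ⟨by rw [dilate_apply, mul_one, hfq], fun {m n} hmn => ?_⟩
  have mul_of_coprime {m n : ℕ} (hmn : m.Coprime n) (hqm : q.Coprime m) :
      dilate q f (m * n) = dilate q f m * dilate q f n := by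
    rw [dilate_apply_of_coprime hf hfq hqm, dilate_apply, dilate_apply, mul_left_comm,
      hf.2 (hqm.symm.mul_right hmn)]
  rcases Nat.coprime_or_dvd_of_prime hq m with hqm | hqm
  · exact mul_of_coprime hmn hqm
  · have hqn : q.Coprime n := hmn.coprime_dvd_left hqm
    rw [mul_comm m, mul_comm (dilate q f m), mul_of_coprime hmn.symm hqn]

theorem squareIndicator_mul_apply_prime_pow [Semiring R] {q : ℕ} (hq : q.Prime)
    (f : ArithmeticFunction R) (b : ℕ) : (squareIndicator R * f) (q ^ b) =
      ∑ i ∈ range (b + 1), if Even i then f (q ^ (b - i)) else 0 := by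
  rw [ArithmeticFunction.mul_apply,
    Nat.sum_divisorsAntidiagonal (f := fun x y => squareIndicator R x * f y),
    Nat.sum_divisors_prime_pow hq]
  refine sum_congr rfl fun i hi => ?_
  simp only [squareIndicator_apply (pow_ne_zero i hq.ne_zero), isSquare_prime_pow_iff hq,
    Nat.pow_div (mem_range_succ_iff.mp hi) hq.pos, ite_mul, one_mul, zero_mul]

theorem squareIndicator_mul_apply_prime [Semiring R] {q : ℕ} (hq : q.Prime)
    (f : ArithmeticFunction R) : (squareIndicator R * f) q = f q := by
  simpa [sum_range_succ] using squareIndicator_mul_apply_prime_pow hq f 1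

theorem squareIndicator_mul_apply_prime_pow_add_two [Semiring R] {q : ℕ} (hq : q.Prime)
    (f : ArithmeticFunction R) (b : ℕ) :
    (squareIndicator R * f) (q ^ (b + 2)) = (squareIndicator R * f) (q ^ b) + f (q ^ (b + 2)) := by
  rw [squareIndicator_mul_apply_prime_pow hq, squareIndicator_mul_apply_prime_pow hq,
    sum_range_succ', sum_range_succ']
  simp [Nat.even_add_one, Nat.add_sub_add_right]

theorem dvd_and_dvd_sq_iff {m u : ℕ} (hm : m ≠ 0) :
    u ∣ m ∧ m ∣ u ^ 2 ↔ ∃ s w, u = s * w ∧ m = s ^ 2 * w := by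
  constructor
  · rintro ⟨⟨s, rfl⟩, hdvd⟩
    have u_pos : 0 < u := Nat.pos_of_ne_zero (left_ne_zero_of_mul hm)
    obtain ⟨w, rfl⟩ : s ∣ u := Nat.dvd_of_mul_dvd_mul_left u_pos (by rwa [← sq])
    exact ⟨s, w, rfl, by ring⟩
  · rintro ⟨s, w, rfl, rfl⟩
    exact ⟨⟨s, by ring⟩, ⟨w, by ring⟩⟩

theorem squareIndicator_mul_apply [Semiring R] (f : ArithmeticFunction R) (m : ℕ) :
    (squareIndicator R * f) m = ∑ x ∈ m.divisorsAntidiagonal with IsSquare x.1, f x.2 := by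
  rw [ArithmeticFunction.mul_apply, sum_filter]
  refine sum_congr rfl fun x hx => ?_
  rw [squareIndicator_apply (Nat.ne_zero_of_mem_divisorsAntidiagonal hx).1, ite_mul, one_mul,
    zero_mul]

theorem sum_divisors_dvd_sq [Semiring R] (f : ArithmeticFunction R) (m : ℕ) :
    ∑ u ∈ m.divisors with m ∣ u ^ 2, f (u ^ 2 / m) = (squareIndicator R * f) m := by
  rcases eq_or_ne m 0 with rfl | hm
  · simp
  have sq_div {s w : ℕ} (h : m = s ^ 2 * w) : (s * w) ^ 2 / m = w :=
    Nat.div_eq_of_eq_mul_right (Nat.pos_of_ne_zero hm) (by rw [h]; ring)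
  have div_eq {s w : ℕ} (h : m = s ^ 2 * w) : m / (s * w) = s := by
    have h' : m = s * w * s := by rw [h]; ring
    exact Nat.div_eq_of_eq_mul_right (Nat.pos_of_ne_zero fun h0 => hm (by simp [h', h0])) h'
  rw [squareIndicator_mul_apply]
  refine sum_nbij' (fun u => ((m / u) ^ 2, u ^ 2 / m)) (fun x => x.1.sqrt * x.2) ?_ ?_ ?_ ?_
    fun _ _ => rfl
  · intro u hu
    obtain ⟨s, w, rfl, h⟩ := (dvd_and_dvd_sq_iff hm).mp (by simpa [hm] using hu)
    simp [div_eq h, sq_div h, ← h, hm, IsSquare.sq s]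
  · rintro ⟨_, w⟩ hx
    obtain ⟨⟨h, -⟩, s, rfl⟩ := by simpa using hx
    simpa [hm] using (dvd_and_dvd_sq_iff hm).mpr ⟨s, w, rfl, by rw [← h, sq]⟩
  · intro u hu
    obtain ⟨s, w, rfl, h⟩ := (dvd_and_dvd_sq_iff hm).mp (by simpa [hm] using hu)
    simp [div_eq h, sq_div h]
  · rintro ⟨_, w⟩ hx
    obtain ⟨⟨h, -⟩, s, rfl⟩ := by simpa using hx
    have h : m = s ^ 2 * w := by rw [← h, sq]
    simp [div_eq h, sq_div h, ← sq s]

end Convolution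

section Count

/-- Half the number of triples `(v, z, n)` at level `k = 4 * m - 2`: the number of pairs of a
divisor `s ^ 2` of `m` and a square root of one modulo `2 * m / s ^ 2`. -/
def pairCount : ArithmeticFunction ℕ :=
  squareIndicator ℕ * dilate 2 cardSqrtOne

theorem isMultiplicative_pairCount : pairCount.IsMultiplicative :=
  (isMultiplicative_squareIndicator ℕ).mul
    (isMultiplicative_dilate Nat.prime_two isMultiplicative_cardSqrtOne rfl)

theorem pairCount_odd_prime_pow {q : ℕ} (hq : q.Prime) (hq2 : q ≠ 2) (b : ℕ) :
    pairCount (q ^ b) = b + 1 := by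
  have dilate_eq_two {b : ℕ} (hb : b ≠ 0) : dilate 2 cardSqrtOne (q ^ b) = 2 := by
    rw [dilate_apply_of_coprime isMultiplicative_cardSqrtOne rfl
      (Nat.coprime_two_left.mpr (hq.odd_of_ne_two hq2).pow), cardSqrtOne_odd_prime_pow hq hq2 hb]
  induction b using Nat.twoStepInduction with
  | zero => exact isMultiplicative_pairCount.map_one
  | one =>
    rw [pow_one, pairCount, squareIndicator_mul_apply_prime hq, ← pow_one q,
      dilate_eq_two one_ne_zero]
  | more b ih _ =>
    rw [pairCount, squareIndicator_mul_apply_prime_pow_add_two hq, ← pairCount, ih,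
      dilate_eq_two (by omega)]

theorem pairCount_odd {p : ℕ} (hp : Odd p) : pairCount p = #p.divisors := by
  induction p using Nat.recOnPosPrimePosCoprime with
  | zero => exact absurd hp Nat.not_odd_zero
  | one => rw [isMultiplicative_pairCount.map_one, Nat.divisors_one, card_singleton]
  | prime_pow q b hq hb =>
    have hq2 : q ≠ 2 := by
      rintro rfl
      exact absurd ((Nat.odd_pow_iff hb.ne').mp hp) (by decide)
    rw [pairCount_odd_prime_pow hq hq2, Nat.divisors_prime_pow hq, card_map, card_range]
  | coprime a b _ _ hab iha ihb =>
    obtain ⟨ha, hb⟩ := Nat.odd_mul.mp hp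
    rw [isMultiplicative_pairCount.2 hab, iha ha, ihb hb, hab.card_divisors_mul]

theorem pairCount_two_pow (r : ℕ) {ε : ℕ} (hε : ε ≤ 1) :
    pairCount (2 ^ (2 * r + ε)) = 4 * r + 1 + ε := by
  induction r with
  | zero =>
    interval_cases ε
    · exact isMultiplicative_pairCount.map_one
    · exact squareIndicator_mul_apply_prime Nat.prime_two _
  | succ r ih =>
    rw [show 2 * (r + 1) + ε = 2 * r + ε + 2 by ring, pairCount,
      squareIndicator_mul_apply_prime_pow_add_two Nat.prime_two, ← pairCount, ih, dilate_apply,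
      ← pow_succ', cardSqrtOne_two_pow (by omega)]
    ring

theorem triple_fst_conditions_iff {m v : ℕ} (hm : m ≠ 0) :
    1 ≤ v ∧ v ≤ 4 * m / 2 ∧ 2 * v ∣ 4 * m ∧ 4 * m ∣ v ^ 2 ↔
      ∃ u, (u ∣ m ∧ m ∣ u ^ 2) ∧ 2 * u = v := by
  have iff_half (u : ℕ) : 2 * (2 * u) ∣ 4 * m ∧ 4 * m ∣ (2 * u) ^ 2 ↔ u ∣ m ∧ m ∣ u ^ 2 := by
    rw [← mul_assoc, mul_pow, ← sq 2, show 4 = 2 ^ 2 by rfl,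
      Nat.mul_dvd_mul_iff_left (by norm_num), Nat.mul_dvd_mul_iff_left (by norm_num)]
  constructor
  · rintro ⟨-, -, h⟩
    have two_dvd_sq : 2 ∣ v ^ 2 := (Dvd.intro (2 * m) (by ring)).trans h.2
    obtain ⟨u, rfl⟩ := Nat.prime_two.dvd_of_dvd_pow two_dvd_sq
    exact ⟨u, (iff_half u).mp h, rfl⟩
  · rintro ⟨u, hu, rfl⟩
    have u_pos : 0 < u := Nat.pos_of_dvd_of_pos hu.1 (Nat.pos_of_ne_zero hm)
    have u_le : u ≤ m := Nat.le_of_dvd (Nat.pos_of_ne_zero hm) hu.1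
    exact ⟨by omega, by omega, (iff_half u).mpr hu⟩

theorem two_mul_sq_two_mul_div_four_mul {m u : ℕ} (h : m ∣ u ^ 2) :
    2 * (2 * u) ^ 2 / (4 * m) = 2 * (u ^ 2 / m) := by
  rw [show 2 * (2 * u) ^ 2 = 4 * (2 * u ^ 2) by ring, Nat.mul_div_mul_left _ _ four_pos,
    Nat.mul_div_assoc _ h]

/-- The triples `(v, z, n)` at level `k = 4 * m - 2`, listed according to `u = v / 2`. -/
def triples (m : ℕ) : Finset (ℕ × ℕ × ℕ) :=
  {u ∈ m.divisors | m ∣ u ^ 2}.biUnion fun u =>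
    {2 * u} ×ˢ {z ∈ Icc 1 (2 * (u ^ 2 / m)) | 2 * (u ^ 2 / m) ∣ z ^ 2 - 1} ×ˢ range 2

theorem mem_triples {m : ℕ} (hm : m ≠ 0) (t : ℕ × ℕ × ℕ) :
    t ∈ triples m ↔
      1 ≤ t.1 ∧ t.1 ≤ 4 * m / 2 ∧ 2 * t.1 ∣ 4 * m ∧ 4 * m ∣ t.1 ^ 2 ∧
      1 ≤ t.2.1 ∧ t.2.1 ≤ 2 * t.1 ^ 2 / (4 * m) ∧
      2 * t.1 ^ 2 / (4 * m) ∣ t.2.1 ^ 2 - 1 ∧ t.2.2 ≤ 1 := by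
  obtain ⟨v, z, n⟩ := t
  simp only [triples, mem_biUnion, mem_filter, Nat.mem_divisors, mem_product, mem_singleton,
    mem_Icc, mem_range_succ_iff]
  constructor
  · rintro ⟨u, ⟨⟨hdvd, -⟩, hsq⟩, rfl, ⟨⟨one_le, le⟩, hz⟩, hn⟩
    obtain ⟨one_le_fst, fst_le, dvd, dvd_sq⟩ :=
      (triple_fst_conditions_iff hm).mpr ⟨u, ⟨hdvd, hsq⟩, rfl⟩
    rw [two_mul_sq_two_mul_div_four_mul hsq]
    exact ⟨one_le_fst, fst_le, dvd, dvd_sq, one_le, le, hz, hn⟩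
  · rintro ⟨one_le_fst, fst_le, dvd, dvd_sq, one_le, le, hz, hn⟩
    obtain ⟨u, ⟨hdvd, hsq⟩, rfl⟩ :=
      (triple_fst_conditions_iff hm).mp ⟨one_le_fst, fst_le, dvd, dvd_sq⟩
    rw [two_mul_sq_two_mul_div_four_mul hsq] at le hz
    exact ⟨u, ⟨⟨hdvd, hm⟩, hsq⟩, rfl, ⟨⟨one_le, le⟩, hz⟩, hn⟩

theorem card_triples (m : ℕ) : #(triples m) = 2 * pairCount m := by
  have fst_injective {u u' : ℕ} {t : ℕ × ℕ × ℕ} (h : t.1 = 2 * u) (h' : t.1 = 2 * u') : u = u' := by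
    omega
  calc #(triples m) = ∑ u ∈ m.divisors with m ∣ u ^ 2, 2 * dilate 2 cardSqrtOne (u ^ 2 / m) := by
        rw [triples, card_biUnion fun u _ u' _ hne => disjoint_left.mpr fun t ht ht' => hne <|
          fst_injective (mem_singleton.mp (mem_product.mp ht).1)
            (mem_singleton.mp (mem_product.mp ht').1)]
        refine sum_congr rfl fun u _ => ?_
        rw [card_product, card_product, card_singleton, one_mul, card_range, mul_comm,
          dilate_apply, cardSqrtOne_apply]
    _ = 2 * pairCount m := by rw [← mul_sum, sum_divisors_dvd_sq, pairCount]

end Count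

/-- for `4 ∣ k+2` with `k̄ = 2^{2r+ε}·p` (`p` odd, `ε ∈ {0,1}`, `r ≥ 1`),
the number of triples `(v,z,n)` parametrising the physical invariants `M^{2,0}[v,z,n]`
equals `2·(4r-3+ε)·d(p)`. -/
theorem count_M20 (k p r ε : ℕ) (hk : 4 ∣ k + 2) (hk0 : 0 < k)
    (hp : Odd p) (hr : 1 ≤ r) (hε : ε ≤ 1) (hdec : k + 2 = 2 ^ (2 * r + ε) * p) :
    Nat.card {t : ℕ × ℕ × ℕ //
        1 ≤ t.1 ∧ t.1 ≤ (k + 2) / 2 ∧ 2 * t.1 ∣ (k + 2) ∧ (k + 2) ∣ t.1 ^ 2 ∧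
        1 ≤ t.2.1 ∧ t.2.1 ≤ 2 * t.1 ^ 2 / (k + 2) ∧
        (2 * t.1 ^ 2 / (k + 2)) ∣ (t.2.1 ^ 2 - 1) ∧
        t.2.2 ≤ 1}
      = 2 * (4 * r - 3 + ε) * p.divisors.card := by
  obtain ⟨r, rfl⟩ := Nat.exists_eq_add_of_le' hr
  have four_mul : k + 2 = 4 * (2 ^ (2 * r + ε) * p) := by rw [hdec]; ring
  have coprime : (2 ^ (2 * r + ε)).Coprime p := (Nat.coprime_two_left.mpr hp).pow_left _
  rw [four_mul, Nat.subtype_card (triples _) (mem_triples (by omega)), card_triples,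
    isMultiplicative_pairCount.2 coprime, pairCount_two_pow r hε, pairCount_odd hp,
    show 4 * (r + 1) - 3 = 4 * r + 1 by omega, mul_assoc]
end

section
/- Let k be a positive integer with 4 ∣ k+2, set k̄ = k+2, and write k̄ = 2^{2r+ε}·p with p odd, ε ∈ {0,1}, and r ≥ 1. Then the number of triples (v,z,n) of integers with 1 ≤ v ≤ k̄/2, 2v ∣ k̄, 2v²/k̄ an odd integer, 1 ≤ z ≤ 2v²/k̄, (2v²/k̄) ∣ (z²−1), and n ∈ {0,1}, equals 2·ε·d(p), where d(m) denotes the number of positive divisors of m. -/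
/-!
With `K = k + 2` and `w = K / 2v`, the conditions on `v` say `v = w * m` and
`K = 2 * w ^ 2 * m` with `m = 2v² / K` odd. Comparing powers of two, this forces `ε = 1` and
`w = 2 ^ r * c` with `p = c ^ 2 * m`. For odd `m`, the Chinese remainder theorem matches the `z`
modulo `m` satisfying `z² = 1` with the factorizations `m = a * b` into coprime factors, `z` being
`1` modulo `a` and `-1` modulo `b`. Finally `(c, a, b) ↦ (c * a, c * b)` runs through every
factorization `p = d * e` exactly once, `c` being the gcd of `d` and `e`.
-/

section

open Finset

section SquareRootsOfOne

/-- The square roots of `1` modulo `m`, represented by integers in `[1, m]`; on this range the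
subtraction in `z ^ 2 - 1` does not truncate. -/
def sqrtsOfOne (m : ℕ) : Finset ℕ := {z ∈ Icc 1 m | m ∣ z ^ 2 - 1}

/-- The ordered factorizations `m = a * b` into coprime factors, i.e. the unitary divisors `a` of
`m` together with their cofactors. -/
def coprimeDivisorsAntidiagonal (m : ℕ) : Finset (ℕ × ℕ) :=
  {x ∈ m.divisorsAntidiagonal | x.1.Coprime x.2}

variable {a b m z z' : ℕ}

lemma mem_sqrtsOfOne : z ∈ sqrtsOfOne m ↔ z ∈ Icc 1 m ∧ m ∣ z ^ 2 - 1 :=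
  mem_filter

lemma mem_coprimeDivisorsAntidiagonal :
    (a, b) ∈ coprimeDivisorsAntidiagonal m ↔ (a * b = m ∧ m ≠ 0) ∧ a.Coprime b := by
  rw [coprimeDivisorsAntidiagonal, mem_filter, Nat.mem_divisorsAntidiagonal]

lemma sq_sub_one_eq_sub_one_mul_add_one (z : ℕ) : z ^ 2 - 1 = (z - 1) * (z + 1) := by
  rw [mul_comm, ← Nat.sq_sub_sq, one_pow]

lemma coprime_gcd_sub_one_gcd_add_one (hm : Odd m) (hz : 1 ≤ z) :
    (m.gcd (z - 1)).Coprime (m.gcd (z + 1)) := by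
  refine Nat.coprime_iff_gcd_eq_one.2 (Nat.Coprime.eq_one_of_dvd (m := 2) ?_ ?_)
  · exact (Nat.coprime_two_right.2 hm).coprime_dvd_left
      ((Nat.gcd_dvd_left _ _).trans (Nat.gcd_dvd_left _ _))
  · have h := Nat.dvd_sub ((Nat.gcd_dvd_right _ _).trans (Nat.gcd_dvd_right m (z + 1)))
      ((Nat.gcd_dvd_left _ _).trans (Nat.gcd_dvd_right m (z - 1)))
    rwa [show z + 1 - (z - 1) = 2 by omega] at h

lemma gcd_sub_one_mul_gcd_add_one (hm : Odd m) (hz : 1 ≤ z) (h : m ∣ z ^ 2 - 1) :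
    m.gcd (z - 1) * m.gcd (z + 1) = m := by
  refine Nat.dvd_antisymm ((coprime_gcd_sub_one_gcd_add_one hm hz).mul_dvd_of_dvd_of_dvd
    (Nat.gcd_dvd_left _ _) (Nat.gcd_dvd_left _ _)) ?_
  rw [sq_sub_one_eq_sub_one_mul_add_one] at h
  simpa only [Nat.gcd_eq_left h] using Nat.gcd_mul_right_dvd_mul_gcd m (z - 1) (z + 1)

lemma exists_dvd_sub_one_dvd_add_one (hab : a.Coprime b) (ha : 0 < a) (hb : 0 < b) :
    ∃ z ∈ Icc 1 (a * b), a ∣ z - 1 ∧ b ∣ z + 1 := by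
  -- With `y = z - 1` the condition modulo `b` is `y = -2`; the residue `2 * (b - 1)` represents it
  -- without truncation at `b = 1`.
  let y := Nat.chineseRemainder hab 0 (2 * (b - 1))
  refine ⟨y + 1, mem_Icc.2 ⟨by omega, Nat.chineseRemainder_lt_mul hab _ _ ha.ne' hb.ne'⟩,
    Nat.modEq_zero_iff_dvd.1 y.2.1, Nat.modEq_zero_iff_dvd.1 ?_⟩
  calc (y : ℕ) + 2 ≡ 2 * (b - 1) + 2 [MOD b] := y.2.2.add_right 2
    _ = 2 * b := by omega
    _ ≡ 0 [MOD b] := Nat.modEq_zero_iff_dvd.2 (dvd_mul_left b 2)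

lemma eq_of_dvd_sub_one_of_dvd_add_one (hab : a.Coprime b)
    (hz : z ∈ Icc 1 (a * b)) (hza : a ∣ z - 1) (hzb : b ∣ z + 1)
    (hz' : z' ∈ Icc 1 (a * b)) (hza' : a ∣ z' - 1) (hzb' : b ∣ z' + 1) : z = z' := by
  rw [mem_Icc] at hz hz'
  have mod_a : z - 1 ≡ z' - 1 [MOD a] :=
    (Nat.modEq_zero_iff_dvd.2 hza).trans (Nat.modEq_zero_iff_dvd.2 hza').symm
  have mod_b : z - 1 ≡ z' - 1 [MOD b] := by
    refine Nat.ModEq.add_right_cancel' 2 ?_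
    rw [show z - 1 + 2 = z + 1 by omega, show z' - 1 + 2 = z' + 1 by omega]
    exact (Nat.modEq_zero_iff_dvd.2 hzb).trans (Nat.modEq_zero_iff_dvd.2 hzb').symm
  have mod_ab := (Nat.modEq_and_modEq_iff_modEq_mul hab).1 ⟨mod_a, mod_b⟩
  have := mod_ab.eq_of_lt_of_lt (by omega) (by omega)
  omega

theorem card_sqrtsOfOne (hm : Odd m) :
    #(sqrtsOfOne m) = #(coprimeDivisorsAntidiagonal m) := by
  refine card_nbij (fun z ↦ (m.gcd (z - 1), m.gcd (z + 1))) ?_ ?_ ?_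
  · intro z hz
    obtain ⟨hz, hdvd⟩ := mem_sqrtsOfOne.1 hz
    have hz := (mem_Icc.1 hz).1
    exact mem_coprimeDivisorsAntidiagonal.2 ⟨⟨gcd_sub_one_mul_gcd_add_one hm hz hdvd, hm.pos.ne'⟩,
      coprime_gcd_sub_one_gcd_add_one hm hz⟩
  · intro z hz z' hz' heq
    obtain ⟨hz, hdvd⟩ := mem_sqrtsOfOne.1 hz
    obtain ⟨hz', -⟩ := mem_sqrtsOfOne.1 hz'
    obtain ⟨heq_sub, heq_add⟩ := Prod.mk.inj heq
    have hmul := gcd_sub_one_mul_gcd_add_one hm (mem_Icc.1 hz).1 hdvd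
    exact eq_of_dvd_sub_one_of_dvd_add_one
      (coprime_gcd_sub_one_gcd_add_one hm (mem_Icc.1 hz).1)
      (hmul.symm ▸ hz) (Nat.gcd_dvd_right _ _) (Nat.gcd_dvd_right _ _)
      (hmul.symm ▸ hz') (heq_sub ▸ Nat.gcd_dvd_right _ _) (heq_add ▸ Nat.gcd_dvd_right _ _)
  · rintro ⟨a, b⟩ hx
    obtain ⟨⟨rfl, -⟩, hab⟩ := mem_coprimeDivisorsAntidiagonal.1 hx
    obtain ⟨z, hz, hza, hzb⟩ := exists_dvd_sub_one_dvd_add_one hab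
      (Nat.pos_of_mul_pos_right hm.pos) (Nat.pos_of_mul_pos_left hm.pos)
    have hdvd : a * b ∣ z ^ 2 - 1 := sq_sub_one_eq_sub_one_mul_add_one z ▸ mul_dvd_mul hza hzb
    have a_le : a ≤ (a * b).gcd (z - 1) :=
      Nat.le_of_dvd (Nat.gcd_pos_of_pos_left _ hm.pos) (Nat.dvd_gcd (dvd_mul_right a b) hza)
    have b_le : b ≤ (a * b).gcd (z + 1) :=
      Nat.le_of_dvd (Nat.gcd_pos_of_pos_left _ hm.pos) (Nat.dvd_gcd (dvd_mul_left b a) hzb)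
    obtain ⟨ha, hb⟩ := (mul_eq_mul_iff_eq_and_eq_of_pos a_le b_le
      (Nat.pos_of_mul_pos_right hm.pos) (Nat.gcd_pos_of_pos_left _ hm.pos)).1
      (gcd_sub_one_mul_gcd_add_one hm (mem_Icc.1 hz).1 hdvd).symm
    exact ⟨z, mem_sqrtsOfOne.2 ⟨hz, hdvd⟩, Prod.ext ha.symm hb.symm⟩

end SquareRootsOfOne

section GcdFibres

/-- The positive integers whose square divides `n`; empty for `n = 0`. -/
def sqDivisorRoots (n : ℕ) : Finset ℕ := {c ∈ n.divisors | c ^ 2 ∣ n}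

variable {c m n : ℕ}

lemma mem_sqDivisorRoots : c ∈ sqDivisorRoots n ↔ c ^ 2 ∣ n ∧ n ≠ 0 := by
  rw [sqDivisorRoots, mem_filter, Nat.mem_divisors]
  exact ⟨fun h ↦ ⟨h.2, h.1.2⟩, fun h ↦ ⟨⟨(dvd_pow_self c two_ne_zero).trans h.1, h.2⟩, h.1⟩⟩

lemma pos_of_mem_sqDivisorRoots (h : c ∈ sqDivisorRoots n) : 0 < c :=
  Nat.pos_of_mem_divisors (mem_filter.1 h).1

lemma card_filter_gcd_eq (hc : 0 < c) (m : ℕ) :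
    #{x ∈ (c ^ 2 * m).divisorsAntidiagonal | x.1.gcd x.2 = c} =
      #(coprimeDivisorsAntidiagonal m) := by
  symm
  refine card_nbij (fun x ↦ (c * x.1, c * x.2)) ?_ ?_ ?_
  · rintro ⟨a, b⟩ hx
    obtain ⟨⟨rfl, hm⟩, hab⟩ := mem_coprimeDivisorsAntidiagonal.1 hx
    refine mem_filter.2 ⟨Nat.mem_divisorsAntidiagonal.2 ⟨by ring, by positivity⟩, ?_⟩
    rw [Nat.gcd_mul_left, hab.gcd_eq_one, mul_one]
  · rintro ⟨a, b⟩ - ⟨a', b'⟩ - heq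
    obtain ⟨ha, hb⟩ := Prod.mk.inj heq
    exact Prod.ext (Nat.eq_of_mul_eq_mul_left hc ha) (Nat.eq_of_mul_eq_mul_left hc hb)
  · rintro ⟨d, e⟩ hx
    obtain ⟨hde, hgcd⟩ := mem_filter.1 hx
    obtain ⟨hmul, hne⟩ := Nat.mem_divisorsAntidiagonal.1 hde
    obtain ⟨a, b, hab, rfl, rfl⟩ : ∃ a b, a.Coprime b ∧ d = c * a ∧ e = c * b := by
      obtain ⟨a, b, hab, ha, hb⟩ := Nat.exists_coprime d e
      exact ⟨a, b, hab, by rw [← hgcd, mul_comm]; exact ha, by rw [← hgcd, mul_comm]; exact hb⟩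
    have hm : a * b = m := Nat.eq_of_mul_eq_mul_left (pow_pos hc 2) (by rw [← hmul]; ring)
    exact ⟨(a, b), mem_coprimeDivisorsAntidiagonal.2 ⟨⟨hm, right_ne_zero_of_mul hne⟩, hab⟩, rfl⟩

theorem sum_card_coprimeDivisorsAntidiagonal (n : ℕ) :
    ∑ c ∈ sqDivisorRoots n, #(coprimeDivisorsAntidiagonal (n / c ^ 2)) = #n.divisors := by
  have gcd_mem : ∀ x ∈ n.divisorsAntidiagonal, x.1.gcd x.2 ∈ sqDivisorRoots n := by
    rintro ⟨d, e⟩ hx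
    obtain ⟨rfl, hne⟩ := Nat.mem_divisorsAntidiagonal.1 hx
    refine mem_sqDivisorRoots.2 ⟨?_, hne⟩
    exact sq (d.gcd e) ▸ mul_dvd_mul (Nat.gcd_dvd_left _ _) (Nat.gcd_dvd_right _ _)
  have card_divisors : #n.divisors = #n.divisorsAntidiagonal := by
    rw [← Nat.map_div_right_divisors, card_map]
  rw [card_divisors, card_eq_sum_card_fiberwise gcd_mem]
  refine sum_congr rfl fun c hc ↦ ?_
  have c_pos := pos_of_mem_sqDivisorRoots hc
  obtain ⟨⟨m, rfl⟩, -⟩ := mem_sqDivisorRoots.1 hc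
  rw [Nat.mul_div_cancel_left m (by positivity), card_filter_gcd_eq c_pos]

end GcdFibres

section FirstParameter

/-- The values of the parameter `v` of the invariants `M^{2,1}[v,z,n]`, where `K` is the paper's
`k̄`. -/
def m21Values (K : ℕ) : Finset ℕ :=
  {v ∈ Icc 1 (K / 2) | 2 * v ∣ K ∧ K ∣ 2 * v ^ 2 ∧ Odd (2 * v ^ 2 / K)}

variable {K m p r v w ε : ℕ}

lemma two_mul_mul_sq_div (hw : 0 < w) (hm : 0 < m) : 2 * (w * m) ^ 2 / (2 * w ^ 2 * m) = m := by
  rw [show 2 * (w * m) ^ 2 = 2 * w ^ 2 * m * m by ring, Nat.mul_div_cancel_left _ (by positivity)]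

lemma mul_mem_m21Values (hw : 0 < w) (hm : Odd m) : w * m ∈ m21Values (2 * w ^ 2 * m) := by
  have hm_pos := hm.pos
  have hdvd : 2 * (w * m) ∣ 2 * w ^ 2 * m := ⟨w, by ring⟩
  refine mem_filter.2 ⟨mem_Icc.2 ⟨Nat.mul_pos hw hm_pos, ?_⟩, hdvd, ⟨m, by ring⟩, ?_⟩
  · have := Nat.le_of_dvd (by positivity) hdvd
    omega
  · rwa [two_mul_mul_sq_div hw hm_pos]

lemma exists_eq_mul_of_mem_m21Values (h : v ∈ m21Values K) :
    ∃ w m, 0 < w ∧ Odd m ∧ K = 2 * w ^ 2 * m ∧ v = w * m := by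
  obtain ⟨hv, ⟨w, rfl⟩, ⟨m, hm⟩, hodd⟩ := mem_filter.1 h
  obtain ⟨hv_pos, hv_le⟩ := mem_Icc.1 hv
  have hK : 0 < 2 * v * w := by omega
  rw [hm, Nat.mul_div_cancel_left _ hK] at hodd
  have hvw : v = w * m :=
    Nat.eq_of_mul_eq_mul_left (Nat.pos_of_mul_pos_right hK) (by rw [← mul_assoc, ← hm]; ring)
  exact ⟨w, m, Nat.pos_of_mul_pos_left hK, hodd, by rw [hvw]; ring, hvw⟩

lemma eq_one_and_exists_of_two_mul_sq_mul_eq (hm : Odd m) (hp : Odd p) (hε : ε ≤ 1)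
    (h : 2 * w ^ 2 * m = 2 ^ (2 * r + ε) * p) :
    ε = 1 ∧ ∃ c, w = 2 ^ r * c ∧ p = c ^ 2 * m := by
  have hpos : 0 < 2 * w ^ 2 * m := h ▸ Nat.mul_pos (by positivity) hp.pos
  have hw : w ≠ 0 := by
    rintro rfl
    simp at hpos
  have hval : 2 * padicValNat 2 w + 1 = 2 * r + ε := by
    have padicValNat_odd {n : ℕ} (hn : Odd n) : padicValNat 2 n = 0 :=
      padicValNat.eq_zero_of_not_dvd hn.not_two_dvd_nat
    have hval_eq := congrArg (padicValNat 2) h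
    rw [padicValNat.mul (by positivity) hm.pos.ne', padicValNat.mul two_ne_zero (by positivity),
      padicValNat.mul (by positivity) hp.pos.ne', padicValNat.pow, padicValNat.prime_pow,
      padicValNat_self, padicValNat_odd hm, padicValNat_odd hp] at hval_eq
    omega
  obtain ⟨c, rfl⟩ : 2 ^ r ∣ w := by
    rw [show r = padicValNat 2 w by omega]
    exact pow_padicValNat_dvd
  obtain rfl : ε = 1 := by omega
  exact ⟨rfl, c, rfl, Nat.eq_of_mul_eq_mul_left (pow_pos two_pos (2 * r + 1)) (by rw [← h]; ring)⟩

lemma m21Values_two_pow_even_mul_odd (hp : Odd p) (r : ℕ) : m21Values (2 ^ (2 * r) * p) = ∅ := by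
  refine eq_empty_of_forall_notMem fun v hv ↦ ?_
  obtain ⟨w, m, -, hm, hK, -⟩ := exists_eq_mul_of_mem_m21Values hv
  exact zero_ne_one (eq_one_and_exists_of_two_mul_sq_mul_eq hm hp zero_le_one hK.symm).1

lemma sum_m21Values_two_pow_odd_mul_odd {M : Type*} [AddCommMonoid M] (hp : Odd p)
    (r : ℕ) (f : ℕ → M) :
    ∑ v ∈ m21Values (2 ^ (2 * r + 1) * p), f (2 * v ^ 2 / (2 ^ (2 * r + 1) * p)) =
      ∑ c ∈ sqDivisorRoots p, f (p / c ^ 2) := by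
  have two_pow_mul_sq_mul (c m : ℕ) :
      2 ^ (2 * r + 1) * (c ^ 2 * m) = 2 * (2 ^ r * c) ^ 2 * m := by ring
  have two_pow_mul_div {c : ℕ} (hc : 0 < c) (m : ℕ) :
      2 ^ r * (c ^ 2 * m / c) = 2 ^ r * c * m := by
    rw [show c ^ 2 * m = c * (c * m) by ring, Nat.mul_div_cancel_left _ hc, mul_assoc]
  symm
  refine sum_bij (fun c _ ↦ 2 ^ r * (p / c)) ?_ ?_ ?_ ?_
  · intro c hc
    have c_pos := pos_of_mem_sqDivisorRoots hc
    obtain ⟨⟨m, rfl⟩, -⟩ := mem_sqDivisorRoots.1 hc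
    rw [two_pow_mul_div c_pos, two_pow_mul_sq_mul]
    exact mul_mem_m21Values (by positivity) (Nat.odd_mul.1 hp).2
  · intro c hc c' hc' heq
    have hdiv : p / c = p / c' := Nat.eq_of_mul_eq_mul_left (by positivity) heq
    have dvd_p {d : ℕ} (hd : d ∈ sqDivisorRoots p) : d ∣ p :=
      Nat.dvd_of_mem_divisors (mem_filter.1 hd).1
    rw [← Nat.div_div_self (dvd_p hc) hp.pos.ne', hdiv, Nat.div_div_self (dvd_p hc') hp.pos.ne']
  · intro v hv
    obtain ⟨w, m, hw, hm, hK, rfl⟩ := exists_eq_mul_of_mem_m21Values hv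
    obtain ⟨-, c, rfl, rfl⟩ := eq_one_and_exists_of_two_mul_sq_mul_eq hm hp le_rfl hK.symm
    exact ⟨c, mem_sqDivisorRoots.2 ⟨dvd_mul_right _ _, hp.pos.ne'⟩,
      two_pow_mul_div (Nat.pos_of_mul_pos_left hw) m⟩
  · intro c hc
    have c_pos := pos_of_mem_sqDivisorRoots hc
    obtain ⟨⟨m, rfl⟩, -⟩ := mem_sqDivisorRoots.1 hc
    rw [two_pow_mul_div c_pos, two_pow_mul_sq_mul, Nat.mul_div_cancel_left m (by positivity),
      two_mul_mul_sq_div (by positivity) (Nat.odd_mul.1 hp).2.pos]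

theorem sum_card_sqrtsOfOne_m21Values (hp : Odd p) (hε : ε ≤ 1) (r : ℕ) :
    ∑ v ∈ m21Values (2 ^ (2 * r + ε) * p), #(sqrtsOfOne (2 * v ^ 2 / (2 ^ (2 * r + ε) * p))) =
      ε * #p.divisors := by
  obtain rfl | rfl := Nat.le_one_iff_eq_zero_or_eq_one.1 hε
  · rw [add_zero, m21Values_two_pow_even_mul_odd hp, sum_empty, zero_mul]
  · rw [sum_m21Values_two_pow_odd_mul_odd hp r fun m ↦ #(sqrtsOfOne m), one_mul,
      ← sum_card_coprimeDivisorsAntidiagonal]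
    refine sum_congr rfl fun c hc ↦ card_sqrtsOfOne ?_
    exact hp.of_dvd_nat (Nat.div_dvd_of_dvd (mem_sqDivisorRoots.1 hc).1)

end FirstParameter

theorem count_M21_general (K p r ε : ℕ) (hp : Odd p) (hε : ε ≤ 1)
    (hdec : K = 2 ^ (2 * r + ε) * p) :
    Nat.card {t : ℕ × ℕ × ℕ //
        1 ≤ t.1 ∧ t.1 ≤ K / 2 ∧ 2 * t.1 ∣ K ∧
        K ∣ 2 * t.1 ^ 2 ∧ Odd (2 * t.1 ^ 2 / K) ∧
        1 ≤ t.2.1 ∧ t.2.1 ≤ 2 * t.1 ^ 2 / K ∧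
        (2 * t.1 ^ 2 / K) ∣ (t.2.1 ^ 2 - 1) ∧
        t.2.2 ≤ 1}
      = 2 * ε * p.divisors.card := by
  let params : Finset (Σ _ : ℕ, ℕ × ℕ) :=
    (m21Values K).sigma fun v ↦ sqrtsOfOne (2 * v ^ 2 / K) ×ˢ range 2
  rw [Nat.subtype_card (params.map (Equiv.sigmaEquivProd ℕ (ℕ × ℕ)).toEmbedding), card_map]
  · simp only [params, card_sigma, card_product, card_range]
    rw [← sum_mul, hdec, sum_card_sqrtsOfOne_m21Values hp hε]
    ring
  · rintro ⟨v, z, n⟩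
    simp only [params, mem_map_equiv, Equiv.sigmaEquivProd_symm_apply, mem_sigma, mem_product,
      m21Values, sqrtsOfOne, mem_filter, mem_Icc, mem_range, Nat.lt_succ_iff, and_assoc]

end

/-- for `4 ∣ k+2` with `k̄ = 2^{2r+ε}·p` (`p` odd, `ε ∈ {0,1}`, `r ≥ 1`),
the number of triples `(v,z,n)` parametrising the physical invariants `M^{2,1}[v,z,n]`
equals `2·ε·d(p)`. -/
theorem count_M21 (k p r ε : ℕ) (hk : 4 ∣ k + 2) (hk0 : 0 < k)
    (hp : Odd p) (hr : 1 ≤ r) (hε : ε ≤ 1) (hdec : k + 2 = 2 ^ (2 * r + ε) * p) :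
    Nat.card {t : ℕ × ℕ × ℕ //
        1 ≤ t.1 ∧ t.1 ≤ (k + 2) / 2 ∧ 2 * t.1 ∣ (k + 2) ∧
        (k + 2) ∣ 2 * t.1 ^ 2 ∧ Odd (2 * t.1 ^ 2 / (k + 2)) ∧
        1 ≤ t.2.1 ∧ t.2.1 ≤ 2 * t.1 ^ 2 / (k + 2) ∧
        (2 * t.1 ^ 2 / (k + 2)) ∣ (t.2.1 ^ 2 - 1) ∧
        t.2.2 ≤ 1}
      = 2 * ε * p.divisors.card :=
  count_M21_general (k + 2) p r ε hp hε hdec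
end
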